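/- Let Φ be an n×R real matrix and τ ∈ (0,1) with ‖ΦᵀΦ − Id_R‖_op ≤ τ. Then for every n×n real matrix A and every x in the column span of Φ with ‖x‖ = 1: ‖Ax‖ ≤ (1/√(1−τ)) · √( Σ_{l=1}^R ‖A·Φ_{·l}‖² ), where Φ_{·l} denotes the l-th column of Φ. -/

import Mathlib

open Matrix

noncomputable section

/-- Operator (spectral) norm of a rectangular real matrix. -/
def matOpNorm {m n : ℕ} (A : Matrix (Fin m) (Fin n) ℝ) : ℝ :=
  ‖LinearMap.toContinuousLinearMap (Matrix.toEuclideanLin A)‖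

/-- Euclidean norm of a vector in `Fin n → ℝ`. -/
def euclNorm {n : ℕ} (v : Fin n → ℝ) : ℝ :=
  Real.sqrt (∑ j, v j ^ 2)

/-!
Write `x = Φα`. Since `‖Φα‖² - ‖α‖² = ⟨α, (ΦᵀΦ - 1)α⟩ ≥ -τ‖α‖²`, a unit vector `x` has
`‖α‖ ≤ 1 / √(1 - τ)`. On the other hand `Ax = ∑ α_l AΦ_l`, so the triangle inequality and
Cauchy–Schwarz give `‖Ax‖ ≤ ‖α‖ √(∑ ‖AΦ_l‖²)`. Only the Gram matrix `ΦᵀΦ` of the columns enters, so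
the columns may be any finite family in an inner product space and `A` any linear map out of it.
-/

section GramMatrix

open Submodule WithLp
open scoped InnerProductSpace Matrix.Norms.L2Operator

variable {𝕜 ι E F : Type*} [RCLike 𝕜] [Fintype ι]
  [SeminormedAddCommGroup E] [InnerProductSpace 𝕜 E]
  [SeminormedAddCommGroup F] [NormedSpace 𝕜 F]

theorem norm_sum_smul_le_norm_mul_sqrt_sum_norm_sq (α : EuclideanSpace 𝕜 ι) (v : ι → F) :
    ‖∑ l, α l • v l‖ ≤ ‖α‖ * √(∑ l, ‖v l‖ ^ 2) := by
  calc ‖∑ l, α l • v l‖ ≤ ∑ l, ‖α l • v l‖ := norm_sum_le _ _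
    _ = ∑ l, ‖α l‖ * ‖v l‖ := by simp only [norm_smul]
    _ ≤ √(∑ l, ‖α l‖ ^ 2) * √(∑ l, ‖v l‖ ^ 2) := Real.sum_mul_le_sqrt_mul_sqrt _ _ _
    _ = ‖α‖ * √(∑ l, ‖v l‖ ^ 2) := by rw [EuclideanSpace.norm_eq]

variable [DecidableEq ι]

theorem inner_toEuclideanCLM_gram_self (φ : ι → E) (α : EuclideanSpace 𝕜 ι) :
    ⟪α, toEuclideanCLM (𝕜 := 𝕜) (gram 𝕜 φ) α⟫_𝕜 = (‖∑ l, α l • φ l‖ : 𝕜) ^ 2 := by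
  rw [EuclideanSpace.inner_eq_star_dotProduct, ofLp_toEuclideanCLM, dotProduct_comm,
    star_dotProduct_gram_mulVec, inner_self_eq_norm_sq_to_K]

theorem one_sub_norm_gram_sub_one_mul_norm_sq_le (φ : ι → E) (α : EuclideanSpace 𝕜 ι) :
    (1 - ‖gram 𝕜 φ - 1‖) * ‖α‖ ^ 2 ≤ ‖∑ l, α l • φ l‖ ^ 2 := by
  set D := toEuclideanCLM (𝕜 := 𝕜) (gram 𝕜 φ - 1) with hD
  have re_inner_eq : RCLike.re ⟪α, D α⟫_𝕜 = ‖∑ l, α l • φ l‖ ^ 2 - ‖α‖ ^ 2 := by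
    rw [hD, map_sub, map_one, _root_.sub_apply, inner_sub_right,
      inner_toEuclideanCLM_gram_self, map_sub, one_apply_eq_self,
      inner_self_eq_norm_sq]
    norm_cast
  have abs_re_inner_le : |RCLike.re ⟪α, D α⟫_𝕜| ≤ ‖gram 𝕜 φ - 1‖ * ‖α‖ ^ 2 :=
    calc |RCLike.re ⟪α, D α⟫_𝕜| ≤ ‖α‖ * ‖D α‖ :=
          (RCLike.abs_re_le_norm _).trans (norm_inner_le_norm _ _)
      _ ≤ ‖α‖ * (‖gram 𝕜 φ - 1‖ * ‖α‖) := by gcongr; exact D.le_opNorm α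
      _ = ‖gram 𝕜 φ - 1‖ * ‖α‖ ^ 2 := by ring
  linarith [neg_le_of_abs_le abs_re_inner_le]

theorem norm_le_one_div_sqrt_mul_norm_sum_smul {φ : ι → E} {τ : ℝ} (hτ : τ < 1)
    (hφ : ‖gram 𝕜 φ - 1‖ ≤ τ) (α : EuclideanSpace 𝕜 ι) :
    ‖α‖ ≤ 1 / √(1 - τ) * ‖∑ l, α l • φ l‖ := by
  have one_sub_pos : 0 < 1 - τ := sub_pos.mpr hτ
  have sq_le : (1 - τ) * ‖α‖ ^ 2 ≤ ‖∑ l, α l • φ l‖ ^ 2 :=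
    calc (1 - τ) * ‖α‖ ^ 2 ≤ (1 - ‖gram 𝕜 φ - 1‖) * ‖α‖ ^ 2 := by gcongr
      _ ≤ ‖∑ l, α l • φ l‖ ^ 2 := one_sub_norm_gram_sub_one_mul_norm_sq_le φ α
  rw [one_div_mul_eq_div, le_div_iff₀' (Real.sqrt_pos.mpr one_sub_pos)]
  refine le_of_sq_le_sq ?_ (norm_nonneg _)
  rwa [mul_pow, Real.sq_sqrt one_sub_pos.le]

theorem image_norm_bound_on_span_general {φ : ι → E} {τ : ℝ} (hτ : τ < 1)
    (hφ : ‖gram 𝕜 φ - 1‖ ≤ τ) (T : E →ₗ[𝕜] F) {x : E} (hx : x ∈ span 𝕜 (Set.range φ)) :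
    ‖T x‖ ≤ 1 / √(1 - τ) * √(∑ l, ‖T (φ l)‖ ^ 2) * ‖x‖ := by
  obtain ⟨α, rfl⟩ := (mem_span_range_iff_exists_fun 𝕜).mp hx
  calc ‖T (∑ l, α l • φ l)‖ = ‖∑ l, α l • T (φ l)‖ := by simp only [map_sum, map_smul]
    _ ≤ ‖toLp 2 α‖ * √(∑ l, ‖T (φ l)‖ ^ 2) :=
      norm_sum_smul_le_norm_mul_sqrt_sum_norm_sq (toLp 2 α) _
    _ ≤ 1 / √(1 - τ) * ‖∑ l, α l • φ l‖ * √(∑ l, ‖T (φ l)‖ ^ 2) := by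
      gcongr
      exact norm_le_one_div_sqrt_mul_norm_sum_smul hτ hφ (toLp 2 α)
    _ = 1 / √(1 - τ) * √(∑ l, ‖T (φ l)‖ ^ 2) * ‖∑ l, α l • φ l‖ := by ring

end GramMatrix

section EuclideanColumns

open Submodule WithLp
open scoped Matrix.Norms.L2Operator

variable {𝕜 m ι : Type*} [RCLike 𝕜]

theorem gram_toLp_col [Fintype m] (Φ : Matrix m ι 𝕜) :
    gram 𝕜 (fun l => toLp 2 (Φ.col l)) = Φᴴ * Φ := by
  ext k l
  simp [mul_apply, PiLp.inner_apply, mul_comm]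

theorem toLp_mulVec_mem_span_range_toLp_col [Fintype ι] (Φ : Matrix m ι 𝕜) (α : ι → 𝕜) :
    toLp 2 (Φ *ᵥ α) ∈ span 𝕜 (Set.range fun l => toLp 2 (Φ.col l)) := by
  refine (mem_span_range_iff_exists_fun 𝕜).mpr ⟨α, ?_⟩
  ext j
  simp [mulVec, dotProduct, mul_comm]

theorem euclNorm_eq_norm_toLp {n : ℕ} (v : Fin n → ℝ) : euclNorm v = ‖toLp 2 v‖ := by
  simp [euclNorm, EuclideanSpace.norm_eq]

theorem matOpNorm_transpose_mul_self_sub_one {n R : ℕ} (Φ : Matrix (Fin n) (Fin R) ℝ) :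
    matOpNorm (Φᵀ * Φ - 1) = ‖gram ℝ (fun l => toLp 2 (Φ.col l)) - 1‖ := by
  rw [gram_toLp_col, conjTranspose_eq_transpose_of_trivial]
  rfl

end EuclideanColumns

/-- Lemma 7 of the paper: if `Φ` is an `n × R` real matrix with
`‖ΦᵀΦ - Id_R‖_op ≤ τ` for some `τ ∈ (0,1)`, then for every `n × n` real matrix `A` and
every unit vector `x` in the column span of `Φ`,
`‖Ax‖ ≤ (1/√(1-τ)) √(Σ_{l=1}^R ‖A Φ_{·l}‖²)`. -/
theorem image_norm_bound_on_span {n R : ℕ} (Φ : Matrix (Fin n) (Fin R) ℝ)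
    (τ : ℝ) (hτ0 : 0 < τ) (hτ1 : τ < 1)
    (hΦ : matOpNorm (Φᵀ * Φ - 1) ≤ τ)
    (A : Matrix (Fin n) (Fin n) ℝ)
    (x : Fin n → ℝ) (hx : ∃ α : Fin R → ℝ, x = Φ.mulVec α)
    (hxnorm : euclNorm x = 1) :
    euclNorm (A.mulVec x) ≤
      (1 / Real.sqrt (1 - τ)) *
        Real.sqrt (∑ l : Fin R, euclNorm (A.mulVec fun j => Φ j l) ^ 2) := by
  obtain ⟨α, rfl⟩ := hx
  rw [matOpNorm_transpose_mul_self_sub_one] at hΦ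
  simpa [← euclNorm_eq_norm_toLp, hxnorm] using!
    image_norm_bound_on_span_general hτ1 hΦ (toEuclideanLin A)
      (toLp_mulVec_mem_span_range_toLp_col Φ α)

end
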